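/- arXiv:2208.02085 — 2 statements merged into one kernel-verified Lean document; each statement's English description precedes it below -/
import Mathlib

section
/- Adapted Lemma 2.1 of Takahasi (item (2)): suppose Φ₂ is 2π-periodic and C², its zero set within [0, 2π) is exactly S = {0, π} with Φ₂'(0) ≠ 0 and Φ₂'(π) ≠ 0, and its critical set within [0, 2π) is exactly C = {π/2, 3π/2} with Φ₂''(π/2) ≠ 0 and Φ₂''(3π/2) ≠ 0. Then there exist K₀ > 1, ε > 0 and K* > 0 such that for every K ≥ K*, every a, ξ ∈ ℝ and every x ∈ [0, 2π): (i) if Φ₂(x) ≠ 0 and the distance from x to the set C + 2πℤ is at least ε, then |h_a'(x)| ≥ (K/K₀)·ε; and (ii) if the distance from x to C + 2πℤ is at most ε, then Φ₂(x) ≠ 0 and K/K₀ < |h_a''(x)| < K·K₀. -/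
open Real

/-- The circle map with singularities `h_a(x) = x + ξ + a − K·ln|Φ₂(x)|`. -/
noncomputable def ha (Φ₂ : ℝ → ℝ) (K a ξ : ℝ) (x : ℝ) : ℝ :=
  x + ξ + a - K * Real.log |Φ₂ x|

/-- The critical set `C + 2πℤ = {π/2, 3π/2} + 2πℤ`, lifted to `ℝ`. -/
def critSet : Set ℝ :=
  {y | ∃ k : ℤ, y = π / 2 + 2 * π * k ∨ y = 3 * π / 2 + 2 * π * k}

lemma ha_deriv (Φ₂ : ℝ → ℝ) (hd : Differentiable ℝ Φ₂) (K a ξ x : ℝ) (hx : Φ₂ x ≠ 0) :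
    deriv (ha Φ₂ K a ξ) x = 1 - K * (deriv Φ₂ x / Φ₂ x) := by
  have e : ha Φ₂ K a ξ = fun x => x + ξ + a - K * Real.log (Φ₂ x) := by
    funext y; simp [ha, Real.log_abs]
  rw [e]
  exact ((((hasDerivAt_id x).add_const ξ).add_const a).sub
    (((hd x).hasDerivAt.log hx).const_mul K)).deriv

lemma ha_deriv2 (Φ₂ : ℝ → ℝ) (hd : Differentiable ℝ Φ₂) (hd2 : Differentiable ℝ (deriv Φ₂))
    (K a ξ x : ℝ) (hx : Φ₂ x ≠ 0) :
    deriv (deriv (ha Φ₂ K a ξ)) x =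
      -(K * ((deriv (deriv Φ₂) x * Φ₂ x - deriv Φ₂ x * deriv Φ₂ x) / Φ₂ x ^ 2)) := by
  have e : deriv (ha Φ₂ K a ξ) =ᶠ[nhds x] fun y => 1 - K * (deriv Φ₂ y / Φ₂ y) := by
    filter_upwards [hd.continuous.continuousAt.eventually_ne hx] with y hy
    exact ha_deriv Φ₂ hd K a ξ y hy
  rw [e.deriv_eq]
  have := ((((hd2 x).hasDerivAt.div (hd x).hasDerivAt hx).const_mul K).const_sub 1).deriv
  exact this

lemma near_crit (Φ₂ : ℝ → ℝ) (h0 : Continuous Φ₂) (h1 : Continuous (deriv Φ₂))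
    (h2 : Continuous (deriv (deriv Φ₂))) (c : ℝ) (hc : Φ₂ c ≠ 0) (hc1 : deriv Φ₂ c = 0)
    (hc2 : deriv (deriv Φ₂) c ≠ 0) :
    ∃ δ > 0, ∃ A > 0, ∃ B > 0, ∀ x, |x - c| < δ → Φ₂ x ≠ 0 ∧
      A < |(deriv (deriv Φ₂) x * Φ₂ x - deriv Φ₂ x * deriv Φ₂ x) / Φ₂ x ^ 2| ∧
      |(deriv (deriv Φ₂) x * Φ₂ x - deriv Φ₂ x * deriv Φ₂ x) / Φ₂ x ^ 2| < B := by
  set F : ℝ → ℝ := fun x =>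
    |(deriv (deriv Φ₂) x * Φ₂ x - deriv Φ₂ x * deriv Φ₂ x) / Φ₂ x ^ 2| with hF
  have hFc : 0 < F c := by
    simp only [hF, hc1]
    rw [abs_pos]
    simp [hc, hc2]
  have hcont : ContinuousAt F c := by
    have : Φ₂ c ^ 2 ≠ 0 := pow_ne_zero 2 hc
    simp only [hF]
    exact (((h2.continuousAt.mul h0.continuousAt).sub
      (h1.continuousAt.mul h1.continuousAt)).div (h0.continuousAt.pow 2) this).abs
  have ev : ∀ᶠ x in nhds c, Φ₂ x ≠ 0 ∧ F c / 2 < F x ∧ F x < 2 * F c := by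
    filter_upwards [h0.continuousAt.eventually_ne hc,
      hcont.eventually (lt_mem_nhds (show F c / 2 < F c by linarith)),
      hcont.eventually (gt_mem_nhds (show F c < 2 * F c by linarith))] with x a b c
    exact ⟨a, b, c⟩
  obtain ⟨δ, hδ, h⟩ := Metric.eventually_nhds_iff.1 ev
  exact ⟨δ, hδ, F c / 2, by linarith, 2 * F c, by linarith,
    fun x hx => h (by rwa [Real.dist_eq])⟩

lemma crit_near (x δ : ℝ) (hx : x ∈ Set.Ico (0 : ℝ) (2 * π)) (hδ : δ ≤ π / 2)
    (h : Metric.infDist x critSet < δ) : |x - π / 2| < δ ∨ |x - 3 * π / 2| < δ := by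
  have hne : critSet.Nonempty := ⟨π / 2, 0, by simp⟩
  obtain ⟨y, ⟨k, hk⟩, hy⟩ := (Metric.infDist_lt_iff hne).1 h
  rw [Real.dist_eq] at hy
  have hp := Real.pi_pos
  obtain ⟨hy1, hy2⟩ := abs_lt.1 hy
  obtain ⟨hx0, hx1⟩ := hx
  have k0 : k = 0 := by
    have l1 : (-1 : ℝ) < k := by
      by_contra hh
      rcases hk with hk | hk <;> nlinarith
    have l2 : (k : ℝ) < 1 := by
      by_contra hh
      rcases hk with hk | hk <;> nlinarith
    have l1' : (-1 : ℤ) < k := by exact_mod_cast l1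
    have l2' : k < (1 : ℤ) := by exact_mod_cast l2
    omega
  subst k0
  rcases hk with hk | hk
  · left; simpa [hk] using hy
  · right; simpa [hk] using hy

/-- Adapted Lemma 2.1(2) of Takahasi: under the stated hypotheses on the `2π`-periodic `C²`
map `Φ₂` (zeros exactly `{0, π}` in `[0,2π)`, nondegenerate; critical points exactly
`{π/2, 3π/2}` in `[0,2π)`, nondegenerate), there are `K₀ > 1`, `ε > 0`, `K* > 0` such that for
`K ≥ K*`, all `a, ξ` and all `x ∈ [0,2π)`:
(i) if `Φ₂(x) ≠ 0` and `dist(x, C + 2πℤ) ≥ ε` then `|h_a'(x)| ≥ (K/K₀)·ε`;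
(ii) if `dist(x, C + 2πℤ) ≤ ε` then `Φ₂(x) ≠ 0` and `K/K₀ < |h_a''(x)| < K·K₀`. -/
theorem statement12 (Φ₂ : ℝ → ℝ)
    (hper : ∀ x, Φ₂ (x + 2 * π) = Φ₂ x)
    (hC2 : ContDiff ℝ 2 Φ₂)
    (hzero : ∀ x ∈ Set.Ico (0 : ℝ) (2 * π), (Φ₂ x = 0 ↔ x = 0 ∨ x = π))
    (hz1 : deriv Φ₂ 0 ≠ 0) (hz2 : deriv Φ₂ π ≠ 0)
    (hcrit : ∀ x ∈ Set.Ico (0 : ℝ) (2 * π), (deriv Φ₂ x = 0 ↔ x = π / 2 ∨ x = 3 * π / 2))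
    (hc1 : deriv (deriv Φ₂) (π / 2) ≠ 0) (hc2 : deriv (deriv Φ₂) (3 * π / 2) ≠ 0) :
    ∃ K₀ > (1 : ℝ), ∃ ε > (0 : ℝ), ∃ Kstar > (0 : ℝ),
      ∀ K : ℝ, Kstar ≤ K → ∀ a ξ : ℝ, ∀ x ∈ Set.Ico (0 : ℝ) (2 * π),
        (Φ₂ x ≠ 0 → ε ≤ Metric.infDist x critSet →
          K / K₀ * ε ≤ |deriv (ha Φ₂ K a ξ) x|) ∧
        (Metric.infDist x critSet ≤ ε →
          Φ₂ x ≠ 0 ∧ K / K₀ < |deriv (deriv (ha Φ₂ K a ξ)) x| ∧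
            |deriv (deriv (ha Φ₂ K a ξ)) x| < K * K₀) := by
  have hp := Real.pi_pos
  have hd : Differentiable ℝ Φ₂ := hC2.differentiable (by norm_num)
  have hC1 : ContDiff ℝ 1 (deriv Φ₂) := by
    have : ContDiff ℝ (1 + 1) Φ₂ := by simpa [one_add_one_eq_two] using hC2
    exact (contDiff_succ_iff_deriv.1 this).2.2
  have hd2 : Differentiable ℝ (deriv Φ₂) := hC1.differentiable (by norm_num)
  have hc2' : Continuous (deriv (deriv Φ₂)) := hC1.continuous_deriv (by norm_num)
  have m1 : π / 2 ∈ Set.Ico (0 : ℝ) (2 * π) := ⟨by linarith, by linarith⟩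
  have m2 : 3 * π / 2 ∈ Set.Ico (0 : ℝ) (2 * π) := ⟨by linarith, by linarith⟩
  have z1 : Φ₂ (π / 2) ≠ 0 := fun h => by
    rcases (hzero _ m1).1 h with h | h <;> linarith
  have z2 : Φ₂ (3 * π / 2) ≠ 0 := fun h => by
    rcases (hzero _ m2).1 h with h | h <;> linarith
  obtain ⟨δ1, hδ1, A1, hA1, B1, hB1, H1⟩ := near_crit Φ₂ hd.continuous hd2.continuous hc2' _ z1
    ((hcrit _ m1).2 (Or.inl rfl)) hc1
  obtain ⟨δ2, hδ2, A2, hA2, B2, hB2, H2⟩ := near_crit Φ₂ hd.continuous hd2.continuous hc2' _ z2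
    ((hcrit _ m2).2 (Or.inr rfl)) hc2
  obtain ⟨δ, hδ, hδa, hδb, hδc⟩ : ∃ δ > 0, δ ≤ δ1 ∧ δ ≤ δ2 ∧ δ ≤ π / 2 :=
    ⟨min δ1 (min δ2 (π / 2)), by positivity, min_le_left _ _,
      (min_le_right _ _).trans (min_le_left _ _), (min_le_right _ _).trans (min_le_right _ _)⟩
  obtain ⟨ε, hε, hεδ⟩ : ∃ ε > 0, ε < δ := ⟨δ / 2, by linarith, by linarith⟩
  -- lower bound for the derivative away from the critical set
  have hD2π : deriv Φ₂ (2 * π) ≠ 0 := by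
    have e : (fun x => Φ₂ (x + 2 * π)) = Φ₂ := funext hper
    have := deriv_comp_add_const Φ₂ (2 * π) 0
    rw [e, zero_add] at this
    rwa [← this]
  have hcomp : IsCompact (Set.Icc (0 : ℝ) (2 * π) ∩ {x | ε ≤ Metric.infDist x critSet}) :=
    isCompact_Icc.inter_right (isClosed_le continuous_const (Metric.continuous_infDist_pt _))
  obtain ⟨m, hm, Hm⟩ : ∃ m > 0, ∀ x ∈ Set.Icc (0 : ℝ) (2 * π) ∩
      {x | ε ≤ Metric.infDist x critSet}, m ≤ |deriv Φ₂ x| := by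
    refine hcomp.exists_forall_le' (a := 0) hd2.continuous.abs.continuousOn ?_
    rintro x ⟨⟨hx0, hx1⟩, hx⟩
    rw [abs_pos]
    rcases hx1.lt_or_eq with hx1 | hx1
    · intro h
      have : x ∈ critSet := by
        refine ⟨0, ?_⟩
        simpa using (hcrit x ⟨hx0, hx1⟩).1 h
      have := Metric.infDist_zero_of_mem this
      simp only [Set.mem_setOf_eq] at hx
      linarith
    · rwa [hx1]
  obtain ⟨M, HM⟩ : ∃ M, ∀ x ∈ Set.Icc (0 : ℝ) (2 * π), ‖Φ₂ x‖ ≤ M :=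
    isCompact_Icc.exists_bound_of_continuousOn hd.continuous.continuousOn
  have hM : 0 < M := lt_of_lt_of_le (norm_pos_iff.2 z1) (HM _ ⟨m1.1, m1.2.le⟩)
  obtain ⟨q, hq, hqe⟩ : ∃ q > 0, q = m / M := ⟨m / M, by positivity, rfl⟩
  have t1 : 0 < 1 / A1 := by positivity
  have t2 : 0 < 1 / A2 := by positivity
  have t3 : 0 < 2 * ε / q := by positivity
  obtain ⟨K₀, hK₀⟩ : ∃ K₀, K₀ = 2 + 1 / A1 + 1 / A2 + B1 + B2 + 2 * ε / q := ⟨_, rfl⟩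
  have hK₀p : 0 < K₀ := by linarith
  refine ⟨K₀, by linarith, ε, hε, 2 / q, by positivity, ?_⟩
  intro K hK a ξ x hx
  have hKp : 0 < K := lt_of_lt_of_le (by positivity) hK
  have hKq : 2 ≤ K * q := (div_le_iff₀ hq).1 hK
  refine ⟨fun hΦ hdist => ?_, fun hdist => ?_⟩
  · rw [ha_deriv Φ₂ hd K a ξ x hΦ]
    have hq1 : q ≤ |deriv Φ₂ x / Φ₂ x| := by
      rw [abs_div, hqe]
      have b1 := Hm x ⟨⟨hx.1, hx.2.le⟩, hdist⟩
      have b2 := HM x ⟨hx.1, hx.2.le⟩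
      rw [Real.norm_eq_abs] at b2
      exact div_le_div₀ (abs_nonneg _) b1 (abs_pos.2 hΦ) b2
    have b3 : K * q ≤ |K * (deriv Φ₂ x / Φ₂ x)| := by
      rw [abs_mul, abs_of_pos hKp]
      exact mul_le_mul_of_nonneg_left hq1 hKp.le
    have b4 : |K * (deriv Φ₂ x / Φ₂ x)| - |(1 : ℝ)| ≤ |1 - K * (deriv Φ₂ x / Φ₂ x)| := by
      rw [abs_sub_comm]; exact abs_sub_abs_le_abs_sub _ _
    rw [abs_one] at b4
    have b5 : K / K₀ * ε ≤ K * q / 2 := by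
      have : 2 * ε ≤ K₀ * q := (div_le_iff₀ hq).1 (by linarith)
      rw [div_mul_eq_mul_div, div_le_iff₀ hK₀p]
      nlinarith
    linarith
  · have key : ∀ A B : ℝ, 0 < A → 1 / A < K₀ → B < K₀ → (Φ₂ x ≠ 0 ∧
        A < |(deriv (deriv Φ₂) x * Φ₂ x - deriv Φ₂ x * deriv Φ₂ x) / Φ₂ x ^ 2| ∧
        |(deriv (deriv Φ₂) x * Φ₂ x - deriv Φ₂ x * deriv Φ₂ x) / Φ₂ x ^ 2| < B) →
        Φ₂ x ≠ 0 ∧ K / K₀ < |deriv (deriv (ha Φ₂ K a ξ)) x| ∧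
            |deriv (deriv (ha Φ₂ K a ξ)) x| < K * K₀ := by
      rintro A B hA hAK hBK ⟨h0, h1, h2⟩
      refine ⟨h0, ?_⟩
      rw [ha_deriv2 Φ₂ hd hd2 K a ξ x h0, abs_neg, abs_mul, abs_of_pos hKp]
      refine ⟨?_, mul_lt_mul_of_pos_left (h2.trans hBK) hKp⟩
      rw [div_eq_mul_inv]
      refine mul_lt_mul_of_pos_left (lt_trans ?_ h1) hKp
      rw [← one_div]
      exact (one_div_lt hA hK₀p).1 hAK
    rcases crit_near x δ hx hδc (lt_of_le_of_lt hdist hεδ) with h | h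
    · exact key A1 B1 hA1 (by linarith) (by linarith) (H1 x (h.trans_le hδa))
    · exact key A2 B2 hA2 (by linarith) (by linarith) (H2 x (h.trans_le hδb))
end

section
/- Covering lemma near the singularity (Lemma 'cover S1' for the model map): let K > 0, a, ξ ∈ ℝ, h(x) = x + ξ + a − K·ln(sin x) on (0, π), and let n₀ be the least integer with 2πn₀ ≥ h(arctan K). Then there is a strictly increasing sequence (c_n)_{n ∈ ℕ} contained in [arctan K, π), converging to π, such that for each n: c_n is the unique point of [arctan K, π) with h(c_n) = 2π(n₀ + n); h is strictly increasing (hence injective) on [c_n, c_{n+1}]; and h([c_n, c_{n+1}]) = [2π(n₀+n), 2π(n₀+n+1)]. Consequently, for every n and every t ∈ ℝ there exists x ∈ (c_n, c_{n+1}] with h(x) ≡ t (mod 2π), i.e. h maps each interval (c_n, c_{n+1}] onto the whole circle ℝ/2πℤ. -/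
open Filter Topology Real

/-- The model singular circle map `h(x) = x + ξ + a − K·ln(sin x)` on `(0, π)`. -/
noncomputable def h (K a ξ : ℝ) (x : ℝ) : ℝ :=
  x + ξ + a - K * Real.log (Real.sin x)

theorem sin_pos_aux (K : ℝ) (hK : 0 < K) {x : ℝ} (hx : x ∈ Set.Ico (Real.arctan K) π) :
    0 < Real.sin x :=
  Real.sin_pos_of_pos_of_lt_pi (lt_of_lt_of_le (Real.arctan_pos.2 hK) hx.1) hx.2

theorem h_cont (K a ξ : ℝ) (hK : 0 < K) :
    ContinuousOn (h K a ξ) (Set.Ico (Real.arctan K) π) := by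
  unfold h
  apply ContinuousOn.sub (by fun_prop)
  apply ContinuousOn.mul continuousOn_const
  exact Real.continuous_sin.continuousOn.log (fun x hx => (sin_pos_aux K hK hx).ne')

theorem h_mono (K a ξ : ℝ) (hK : 0 < K) :
    StrictMonoOn (h K a ξ) (Set.Ico (Real.arctan K) π) := by
  apply strictMonoOn_of_deriv_pos (convex_Ico _ _) (h_cont K a ξ hK)
  intro x hx
  rw [interior_Ico] at hx
  have hs := sin_pos_aux K hK ⟨hx.1.le, hx.2⟩
  have hd : HasDerivAt (h K a ξ) (1 - K * (Real.cos x / Real.sin x)) x := by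
    unfold h
    exact (((hasDerivAt_id x).add_const ξ).add_const a).sub
      (((Real.hasDerivAt_sin x).log hs.ne').const_mul K)
  rw [hd.deriv]
  have hα := Real.arctan_pos.2 hK
  have hc := Real.cos_arctan_pos K
  have h1 : 0 < Real.sin (x - Real.arctan K) :=
    Real.sin_pos_of_pos_of_lt_pi (by linarith [hx.1]) (by linarith [hx.2])
  have h2 : Real.sin (Real.arctan K) = K * Real.cos (Real.arctan K) := by
    have := Real.tan_mul_cos hc.ne'
    rw [Real.tan_arctan] at this
    exact this.symm
  rw [Real.sin_sub, h2] at h1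
  have h3 : 0 < Real.sin x - K * Real.cos x := by
    apply pos_of_mul_pos_left _ hc.le
    linarith
  have h4 : 1 - K * (Real.cos x / Real.sin x)
      = (Real.sin x - K * Real.cos x) / Real.sin x := by
    field_simp
  rw [h4]
  positivity

theorem h_tendsto (K a ξ : ℝ) (hK : 0 < K) :
    Tendsto (h K a ξ) (𝓝[Set.Ico (Real.arctan K) π] π) atTop := by
  have h1 : Tendsto Real.sin (𝓝[Set.Ico (Real.arctan K) π] π) (𝓝[>] 0) := by
    apply tendsto_nhdsWithin_iff.2
    constructor
    · have := Real.continuous_sin.tendsto π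
      rw [Real.sin_pi] at this
      exact this.mono_left nhdsWithin_le_nhds
    · filter_upwards [self_mem_nhdsWithin] with x hx
      exact sin_pos_aux K hK hx
  have h2 := Real.tendsto_log_nhdsGT_zero.comp h1
  have h3 := (tendsto_neg_atBot_atTop.comp h2).const_mul_atTop hK
  have h4 : Tendsto (fun x : ℝ => x + ξ + a) (𝓝[Set.Ico (Real.arctan K) π] π)
      (𝓝 (π + ξ + a)) :=
    (Continuous.tendsto (by fun_prop) π).mono_left nhdsWithin_le_nhds
  refine (h4.add_atTop h3).congr ?_
  intro x
  simp only [h, Function.comp]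
  ring

theorem h_surj (K a ξ : ℝ) (hK : 0 < K) :
    Set.Ici (h K a ξ (Real.arctan K)) ⊆ h K a ξ '' Set.Ico (Real.arctan K) π := by
  have hlt : Real.arctan K < π := by
    linarith [Real.arctan_lt_pi_div_two K, Real.pi_pos]
  haveI : (𝓝[Set.Ico (Real.arctan K) π] π).NeBot := by
    rw [← mem_closure_iff_nhdsWithin_neBot, closure_Ico hlt.ne]
    exact ⟨hlt.le, le_rfl⟩
  exact isPreconnected_Ico.intermediate_value_Ici (l := 𝓝[Set.Ico (Real.arctan K) π] π)
    ⟨le_rfl, hlt⟩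
    (le_principal_iff.2 self_mem_nhdsWithin) (h_cont K a ξ hK) (h_tendsto K a ξ hK)

/-- Covering lemma near the singularity: with `n₀` the least integer such that
`2πn₀ ≥ h(arctan K)`, there is a strictly increasing sequence `(c_n) ⊆ [arctan K, π)`
converging to `π` such that each `c_n` is the unique point of `[arctan K, π)` with
`h(c_n) = 2π(n₀+n)`, `h` is strictly increasing on `[c_n, c_{n+1}]`,
`h([c_n, c_{n+1}]) = [2π(n₀+n), 2π(n₀+n+1)]`, and consequently for every `t ∈ ℝ` there is
`x ∈ (c_n, c_{n+1}]` with `h(x) ≡ t (mod 2π)`. -/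
theorem statement16 (K a ξ : ℝ) (hK : 0 < K) (n₀ : ℤ)
    (hn₀ : h K a ξ (Real.arctan K) ≤ 2 * π * n₀)
    (hleast : ∀ m : ℤ, h K a ξ (Real.arctan K) ≤ 2 * π * m → n₀ ≤ m) :
    ∃ c : ℕ → ℝ, StrictMono c ∧ (∀ n, c n ∈ Set.Ico (Real.arctan K) π) ∧
      Tendsto c atTop (𝓝 π) ∧
      ∀ n : ℕ,
        (h K a ξ (c n) = 2 * π * ((n₀ : ℝ) + n) ∧
          ∀ y ∈ Set.Ico (Real.arctan K) π,
            h K a ξ y = 2 * π * ((n₀ : ℝ) + n) → y = c n) ∧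
        StrictMonoOn (h K a ξ) (Set.Icc (c n) (c (n + 1))) ∧
        h K a ξ '' Set.Icc (c n) (c (n + 1))
          = Set.Icc (2 * π * ((n₀ : ℝ) + n)) (2 * π * ((n₀ : ℝ) + n + 1)) ∧
        ∀ t : ℝ, ∃ x ∈ Set.Ioc (c n) (c (n + 1)), ∃ k : ℤ,
          h K a ξ x = t + 2 * π * k := by
  have hm := h_mono K a ξ hK
  have hpi := Real.pi_pos
  have hex : ∀ n : ℕ, ∃ x, x ∈ Set.Ico (Real.arctan K) π ∧
      h K a ξ x = 2 * π * ((n₀ : ℝ) + n) := by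
    intro n
    have : 2 * π * ((n₀ : ℝ) + n) ∈ Set.Ici (h K a ξ (Real.arctan K)) := by
      have : 0 ≤ 2 * π * (n : ℝ) := by positivity
      simp only [Set.mem_Ici]
      linarith
    obtain ⟨x, hx, hxe⟩ := h_surj K a ξ hK this
    exact ⟨x, hx, hxe⟩
  choose c hc hce using hex
  have hcm : StrictMono c := by
    intro m n hmn
    rw [← hm.lt_iff_lt (hc m) (hc n), hce, hce]
    have : (m : ℝ) < n := by exact_mod_cast hmn
    gcongr
  refine ⟨c, hcm, hc, ?_, ?_⟩
  · rw [tendsto_order]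
    refine ⟨fun b hb => ?_, fun b hb => Eventually.of_forall fun n => (hc n).2.trans hb⟩
    have hb' : max b (Real.arctan K) ∈ Set.Ico (Real.arctan K) π :=
      ⟨le_max_right _ _, max_lt hb ((hc 0).1.trans_lt (hc 0).2)⟩
    have ht : Tendsto (fun n : ℕ => 2 * π * ((n₀ : ℝ) + n)) atTop atTop :=
      (tendsto_atTop_add_const_left _ _ tendsto_natCast_atTop_atTop).const_mul_atTop
        (by positivity)
    filter_upwards [ht.eventually_gt_atTop (h K a ξ (max b (Real.arctan K)))] with n hn
    rw [← hce n, hm.lt_iff_lt hb' (hc n)] at hn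
    exact (le_max_left _ _).trans_lt hn
  · intro n
    have hsub : Set.Icc (c n) (c (n + 1)) ⊆ Set.Ico (Real.arctan K) π :=
      fun x hx => ⟨(hc n).1.trans hx.1, hx.2.trans_lt (hc (n + 1)).2⟩
    have hle : c n ≤ c (n + 1) := (hcm n.lt_succ_self).le
    have hm' := hm.mono hsub
    have he1 : h K a ξ (c (n + 1)) = 2 * π * ((n₀ : ℝ) + n + 1) := by
      rw [hce]; push_cast; ring
    have himg : h K a ξ '' Set.Icc (c n) (c (n + 1))
          = Set.Icc (2 * π * ((n₀ : ℝ) + n)) (2 * π * ((n₀ : ℝ) + n + 1)) := by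
      rw [← hce n, ← he1]
      apply Set.Subset.antisymm
      · rintro _ ⟨x, hx, rfl⟩
        exact ⟨hm'.monotoneOn ⟨le_rfl, hle⟩ hx hx.1, hm'.monotoneOn hx ⟨hle, le_rfl⟩ hx.2⟩
      · exact intermediate_value_Icc hle ((h_cont K a ξ hK).mono hsub)
    refine ⟨⟨hce n, fun y hy hye => hm.injOn hy (hc n) (hye.trans (hce n).symm)⟩,
      hm', himg, ?_⟩
    intro t
    obtain ⟨k, hk, -⟩ := existsUnique_add_zsmul_mem_Ioc (Real.two_pi_pos) t
      (2 * π * ((n₀ : ℝ) + n))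
    simp only [zsmul_eq_mul] at hk
    have hk2 : t + k * (2 * π) ∈ h K a ξ '' Set.Icc (c n) (c (n + 1)) := by
      rw [himg]
      exact ⟨hk.1.le, by linarith [hk.2]⟩
    obtain ⟨x, hx, hxe⟩ := hk2
    refine ⟨x, ⟨lt_of_le_of_ne hx.1 ?_, hx.2⟩, k, by rw [hxe]; ring⟩
    rintro rfl
    rw [← hxe, hce] at hk
    exact lt_irrefl _ hk.1
end
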